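/- Let K be a field, A an associative unital K-algebra, and let u, w ∈ K be nonzero and x ∈ K arbitrary. Suppose a, b, c ∈ A satisfy a·c = c·a and [a, [a, b]_u]_w = 0. Then [a, [a, [b, c]_x]_u]_w = 0. (This general principle subsumes Lemmas 6.3 and 6.4 of the paper, which are the instances (x,u,w) = (s,s,r) and (x,u,w) = (s,s²,r²).) -/

import Mathlib

/-- The quantum (q-deformed) bracket `[x, y]_w = x*y - w • (y*x)`. -/
def qbr {K : Type*} [Field K] {A : Type*} [Ring A] [Algebra K A]
    (w : K) (x y : A) : A :=
  x * y - w • (y * x)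

/-- If `a` commutes with `c`, then `[a, ·]_v` passes through the bracket with `c`:
`[a, [b, c]_x]_v = [[a, b]_v, c]_x`. -/
theorem qbr_qbr_of_commute {K : Type*} [Field K] {A : Type*} [Ring A] [Algebra K A]
    (v x : K) (a b c : A) (hac : a * c = c * a) :
    qbr v a (qbr x b c) = qbr x (qbr v a b) c := by
  have h1 : a * (c * b) = c * (a * b) := by rw [← mul_assoc, hac, mul_assoc]
  simp only [qbr, mul_sub, sub_mul, smul_sub, mul_smul_comm, smul_mul_assoc, mul_assoc, h1, hac,
    smul_comm v x]
  abel

theorem qbr_pass_general {K : Type*} [Field K] {A : Type*} [Ring A] [Algebra K A]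
    (u w : K) (hu : u ≠ 0) (hw : w ≠ 0) (x : K)
    (a b c : A)
    (hac : a * c = c * a)
    (hserre : qbr w a (qbr u a b) = 0) :
    qbr w a (qbr u a (qbr x b c)) = 0 := by
  -- Two passes of `c` outward turn the goal into `[[a, [a, b]_u]_w, c]_x = [0, c]_x`.
  rw [qbr_qbr_of_commute u x a b c hac, qbr_qbr_of_commute w x a _ c hac, hserre]
  simp [qbr]
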